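/- arXiv:2112.06762 — 3 statements merged into one kernel-verified Lean document; each statement's English description precedes it below -/
import Mathlib

section
/- In Graded Rational Pavelka logic GRPL, the rules ⟨q, φ⟩ ⊳ ⟨1, q̄→φ⟩ and ⟨1, q̄→φ⟩ ⊳ ⟨q, φ⟩ are derivable: for every fuzzy theory Γ, every formula φ of the language of RPL and every rational q ∈ [0,1], Γ proves the graded formula ⟨q, φ⟩ in GRPL if and only if Γ proves the graded formula ⟨1, q̄→φ⟩ in GRPL. -/
/-- The rationals in the unit interval: indices of the truth constants of RPL,
and grades of graded formulas of GRPL. -/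
abbrev UQ := {q : ℚ // 0 ≤ q ∧ q ≤ 1}

instance : Zero UQ := ⟨⟨0, by norm_num⟩⟩
instance : One UQ := ⟨⟨1, by norm_num⟩⟩

/-- Łukasiewicz negation on the rational unit interval: `¬q = 1 - q`. -/
def UQ.lneg (q : UQ) : UQ :=
  ⟨1 - q.1, by obtain ⟨h0, h1⟩ := q.2; constructor <;> linarith⟩

/-- Łukasiewicz implication on the rational unit interval: `q → r = min 1 (1 - q + r)`. -/
def UQ.limp (q r : UQ) : UQ :=
  ⟨min 1 (1 - q.1 + r.1), by
    obtain ⟨hq0, hq1⟩ := q.2; obtain ⟨hr0, hr1⟩ := r.2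
    exact ⟨le_min (by norm_num) (by linarith), min_le_left _ _⟩⟩

/-- Łukasiewicz strong conjunction on the rational unit interval:
`q ⊙ r = max 0 (q + r - 1)`. -/
def UQ.lmul (q r : UQ) : UQ :=
  ⟨max 0 (q.1 + r.1 - 1), by
    obtain ⟨hq0, hq1⟩ := q.2; obtain ⟨hr0, hr1⟩ := r.2
    exact ⟨le_max_left _ _, max_le (by norm_num) (by linarith)⟩⟩

/-- Formulas of the language of RPL: propositional variables, a truth constant `q̄` for
each rational `q ∈ [0,1]`, negation and implication. -/
inductive Fml : Type
  | var : ℕ → Fml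
  | const : UQ → Fml
  | neg : Fml → Fml
  | imp : Fml → Fml → Fml

/-- Strong conjunction, defined: `α ⊙ β := ¬(α → ¬β)`. -/
def Fml.odot (a b : Fml) : Fml := Fml.neg (a.imp b.neg)

/-- (Min-)conjunction, defined: `α ∧ β := α ⊙ (α → β)`. -/
def Fml.conj (a b : Fml) : Fml := a.odot (a.imp b)

/-- Equivalence `α ≡ β`, the conjunction of the two implications. -/
def Fml.eqv (a b : Fml) : Fml := (a.imp b).conj (b.imp a)

/-- Instances of the axiom schemata (A1)-(A4) of Łukasiewicz logic Ł. -/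
inductive IsLukAxiom : Fml → Prop
  | a1 (φ ψ : Fml) : IsLukAxiom (φ.imp (ψ.imp φ))
  | a2 (φ ψ χ : Fml) : IsLukAxiom ((φ.imp ψ).imp ((ψ.imp χ).imp (φ.imp χ)))
  | a3 (φ ψ : Fml) : IsLukAxiom (((φ.imp ψ).imp ψ).imp ((ψ.imp φ).imp φ))
  | a4 (φ ψ : Fml) : IsLukAxiom ((φ.neg.imp ψ.neg).imp (ψ.imp φ))

/-- Axioms of Rational Pavelka logic RPL: the axioms of Ł together with the
bookkeeping axioms (with `1̄ ≡ 1` and `0̄ ≡ 0` rendered as the provability of `1̄`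
and of `¬0̄`, since the basic language `{¬, →}` has no primitive truth constants). -/
inductive IsRPLAxiom : Fml → Prop
  | luk {φ : Fml} : IsLukAxiom φ → IsRPLAxiom φ
  | book_imp (q r : UQ) :
      IsRPLAxiom (((Fml.const q).imp (Fml.const r)).eqv (Fml.const (q.limp r)))
  | book_neg (q : UQ) : IsRPLAxiom ((Fml.const q).neg.eqv (Fml.const q.lneg))
  | book_one : IsRPLAxiom (Fml.const 1)
  | book_zero : IsRPLAxiom (Fml.const 0).neg

/-- `L` is a proof in RPL from the theory `T`: every member of the list is an axiom of RPL,
a member of `T`, or follows from two earlier members by modus ponens. -/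
def IsRPLProofFrom (T : Set Fml) (L : List Fml) : Prop :=
  ∀ i : Fin L.length, IsRPLAxiom (L.get i) ∨ L.get i ∈ T ∨
    ∃ j k : Fin L.length, j < i ∧ k < i ∧ L.get k = (L.get j).imp (L.get i)

/-- `T ⊢_RPL φ`: some proof in RPL from `T` has `φ` as its last element. -/
def RPLProv (T : Set Fml) (φ : Fml) : Prop :=
  ∃ L : List Fml, IsRPLProofFrom T L ∧ L.getLast? = some φ

/-- The fuzzy set of axioms of GRPL: (A) instances of the axioms of Ł in grade 1;
(B) each constant `q̄` in grade `q`; (C) the bookkeeping axioms in grade 1;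
(D) all formulas in grade 0. -/
inductive IsGRPLAxiom : UQ → Fml → Prop
  | luk {φ : Fml} : IsLukAxiom φ → IsGRPLAxiom 1 φ
  | const (q : UQ) : IsGRPLAxiom q (Fml.const q)
  | book_neg (q : UQ) : IsGRPLAxiom 1 ((Fml.const q).neg.eqv (Fml.const q.lneg))
  | book_imp (q r : UQ) :
      IsGRPLAxiom 1 (((Fml.const q).imp (Fml.const r)).eqv (Fml.const (q.limp r)))
  | zero (φ : Fml) : IsGRPLAxiom 0 φ

/-- `L` is a graded proof in GRPL from the set `T` of graded formulas: every member is a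
graded axiom of GRPL, a member of `T`, or follows from earlier members by graded modus
ponens (from `⟨q,φ⟩` and `⟨r,φ→ψ⟩` derive `⟨q⊙r,ψ⟩`) or by lifting (from `⟨q,φ⟩` derive
`⟨r→q, r̄→φ⟩`). -/
def IsGRPLProofFrom (T : Set (UQ × Fml)) (L : List (UQ × Fml)) : Prop :=
  ∀ i : Fin L.length, IsGRPLAxiom (L.get i).1 (L.get i).2 ∨ L.get i ∈ T ∨
    (∃ j k : Fin L.length, j < i ∧ k < i ∧
      (L.get k).2 = (L.get j).2.imp (L.get i).2 ∧
      (L.get i).1 = UQ.lmul (L.get j).1 (L.get k).1) ∨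
    (∃ j : Fin L.length, ∃ r : UQ, j < i ∧
      L.get i = (UQ.limp r (L.get j).1, (Fml.const r).imp (L.get j).2))

/-- `T ⊢_GRPL ⟨q,φ⟩`: some graded proof in GRPL from `T` has `⟨q,φ⟩` as its last element. -/
def GRPLProv (T : Set (UQ × Fml)) (p : UQ × Fml) : Prop :=
  ∃ L : List (UQ × Fml), IsGRPLProofFrom T L ∧ L.getLast? = some p

/-- The set of graded hypotheses `⟨Γ(ψ), ψ⟩` determined by a fuzzy theory `Γ`. -/
def FuzzyThy (Γ : Fml → UQ) : Set (UQ × Fml) := {p | p.1 = Γ p.2}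

/-- An assignment into the standard MV-algebra `[0,1]_Ł` takes values in `[0,1]`. -/
def IsAssignment (v : ℕ → ℝ) : Prop := ∀ n, v n ∈ Set.Icc (0 : ℝ) 1

/-- Evaluation of a formula in the standard MV-algebra `[0,1]_Ł`, with each rational
constant interpreted canonically. -/
noncomputable def eval (v : ℕ → ℝ) : Fml → ℝ
  | Fml.var n => v n
  | Fml.const q => (q.1 : ℝ)
  | Fml.neg φ => 1 - eval v φ
  | Fml.imp φ ψ => min 1 (1 - eval v φ + eval v ψ)

/-- `GRPLStep T L p`: the graded formula `p` may be written as the next line of a graded proof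
from `T` whose earlier lines are the members of `L`. Earlier lines are referred to by membership
rather than by position, so that this notion is monotone in `L`. -/
inductive GRPLStep (T : Set (UQ × Fml)) (L : List (UQ × Fml)) : UQ × Fml → Prop
  | ax {q : UQ} {φ : Fml} : IsGRPLAxiom q φ → GRPLStep T L (q, φ)
  | hyp {p : UQ × Fml} : p ∈ T → GRPLStep T L p
  | mp {q r : UQ} {φ ψ : Fml} :
      (q, φ) ∈ L → (r, φ.imp ψ) ∈ L → GRPLStep T L (q.lmul r, ψ)
  | lift {q : UQ} {φ : Fml} (r : UQ) :
      (q, φ) ∈ L → GRPLStep T L (r.limp q, (Fml.const r).imp φ)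

section GradedProofs

variable {T : Set (UQ × Fml)} {L L' : List (UQ × Fml)} {p : UQ × Fml} {q r : UQ} {φ ψ : Fml}

theorem GRPLStep.mono (hLL' : L ⊆ L') (hp : GRPLStep T L p) : GRPLStep T L' p := by
  cases hp with
  | ax h => exact .ax h
  | hyp h => exact .hyp h
  | mp hφ hφψ => exact .mp (hLL' hφ) (hLL' hφψ)
  | lift r hφ => exact .lift r (hLL' hφ)

theorem isGRPLProofFrom_iff_forall_take :
    IsGRPLProofFrom T L ↔ ∀ i (hi : i < L.length), GRPLStep T (L.take i) L[i] := by
  refine Fin.forall_iff.trans (forall₂_congr fun i hi => ?_)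
  have mem_take {p : UQ × Fml} :
      p ∈ L.take i ↔ ∃ j : Fin L.length, j < ⟨i, hi⟩ ∧ L.get j = p := by
    rw [List.mem_take_iff_getElem]
    exact ⟨fun ⟨j, hj, hjp⟩ => ⟨⟨j, (lt_min_iff.1 hj).2⟩, (lt_min_iff.1 hj).1, hjp⟩,
      fun ⟨j, hj, hjp⟩ => ⟨j, lt_min hj j.2, hjp⟩⟩
  rw [List.get_eq_getElem]
  generalize L[i] = p
  constructor
  · rintro (hax | hT | ⟨j, k, hj, hk, himp, hgrade⟩ | ⟨j, r, hj, rfl⟩)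
    · exact .ax hax
    · exact .hyp hT
    · obtain ⟨q, ψ⟩ := p
      obtain rfl : q = _ := hgrade
      exact .mp (mem_take.2 ⟨j, hj, rfl⟩) (mem_take.2 ⟨k, hk, Prod.ext rfl himp⟩)
    · exact .lift r (mem_take.2 ⟨j, hj, rfl⟩)
  · rintro (hax | hT | ⟨hφ, hφψ⟩ | ⟨r, hφ⟩)
    · exact .inl hax
    · exact .inr (.inl hT)
    · obtain ⟨j, hj, hjφ⟩ := mem_take.1 hφ
      obtain ⟨k, hk, hkφψ⟩ := mem_take.1 hφψ
      exact .inr (.inr (.inl ⟨j, k, hj, hk, by rw [hjφ, hkφψ], by rw [hjφ, hkφψ]⟩))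
    · obtain ⟨j, hj, hjφ⟩ := mem_take.1 hφ
      exact .inr (.inr (.inr ⟨j, r, hj, by rw [hjφ]⟩))

namespace IsGRPLProofFrom

theorem nil : IsGRPLProofFrom T [] := fun i => i.elim0

theorem append_of_steps (hL : IsGRPLProofFrom T L)
    (hL' : ∀ i (hi : i < L'.length), GRPLStep T (L ++ L'.take i) L'[i]) :
    IsGRPLProofFrom T (L ++ L') := by
  rw [isGRPLProofFrom_iff_forall_take] at hL ⊢
  intro i hi
  rcases lt_or_ge i L.length with hiL | hLi
  · rw [List.getElem_append_left hiL, List.take_append_of_le_length hiL.le]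
    exact hL i hiL
  · rw [List.getElem_append_right hLi, List.take_append, List.take_of_length_le hLi]
    exact hL' _ _

theorem append (hL : IsGRPLProofFrom T L) (hL' : IsGRPLProofFrom T L') :
    IsGRPLProofFrom T (L ++ L') :=
  hL.append_of_steps fun i hi =>
    (isGRPLProofFrom_iff_forall_take.1 hL' i hi).mono (List.subset_append_right _ _)

theorem concat (hL : IsGRPLProofFrom T L) (hp : GRPLStep T L p) :
    IsGRPLProofFrom T (L ++ [p]) :=
  hL.append_of_steps fun i hi => by
    obtain rfl : i = 0 := Nat.lt_one_iff.1 hi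
    simpa using hp

end IsGRPLProofFrom

namespace GRPLProv

theorem of_step (hL : IsGRPLProofFrom T L) (hp : GRPLStep T L p) : GRPLProv T p :=
  ⟨L ++ [p], hL.concat hp, List.getLast?_concat⟩

theorem ax (h : IsGRPLAxiom q φ) : GRPLProv T (q, φ) :=
  of_step .nil (.ax h)

theorem mp : GRPLProv T (q, φ) → GRPLProv T (r, φ.imp ψ) → GRPLProv T (q.lmul r, ψ) := by
  rintro ⟨L, hL, hφ⟩ ⟨L', hL', hφψ⟩
  exact of_step (hL.append hL')
    (.mp (List.mem_append_left _ (List.mem_of_getLast? hφ))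
      (List.mem_append_right _ (List.mem_of_getLast? hφψ)))

theorem lift (r : UQ) : GRPLProv T (q, φ) → GRPLProv T (r.limp q, (Fml.const r).imp φ) := by
  rintro ⟨L, hL, hφ⟩
  exact of_step hL (.lift r (List.mem_of_getLast? hφ))

end GRPLProv

end GradedProofs

namespace UQ

theorem limp_self (q : UQ) : q.limp q = 1 :=
  Subtype.ext (show min 1 (1 - q.1 + q.1) = 1 by simp)

theorem lmul_one (q : UQ) : q.lmul 1 = q :=
  Subtype.ext (show max 0 (q.1 + 1 - 1) = q.1 by simpa using q.2.1)

end UQ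

theorem grpl_push_pull_general (T : Set (UQ × Fml)) (φ : Fml) (q : UQ) :
    GRPLProv T (q, φ) ↔ GRPLProv T (1, (Fml.const q).imp φ) := by
  constructor
  · intro h
    simpa only [UQ.limp_self] using h.lift q
  · intro h
    simpa only [UQ.lmul_one] using GRPLProv.mp (.ax (.const q)) h

/-- In GRPL, the rules `⟨q,φ⟩ ⊳ ⟨1, q̄→φ⟩` and `⟨1, q̄→φ⟩ ⊳ ⟨q,φ⟩` are
derivable: for every fuzzy theory `Γ`, every formula `φ` and every rational `q ∈ [0,1]`,
`Γ ⊢_GRPL ⟨q,φ⟩` iff `Γ ⊢_GRPL ⟨1, q̄→φ⟩`. -/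
theorem grpl_push_pull (Γ : Fml → UQ) (φ : Fml) (q : UQ) :
    GRPLProv (FuzzyThy Γ) (q, φ) ↔ GRPLProv (FuzzyThy Γ) (1, (Fml.const q).imp φ) :=
  grpl_push_pull_general (FuzzyThy Γ) φ q
end

section
/- Let T₀ be a set of formulas of the language of RPL, let T = { ⟨1, ψ⟩ : ψ ∈ T₀ }, and let φ be a formula of the language of RPL. If T ⊢_GRPL ⟨1, φ⟩, then there exists a graded proof P of ⟨1, φ⟩ from T in GRPL such that every graded formula occurring in P has grade 1. -/
/-!
A graded proof of `⟨q, φ⟩` can be internalized: replacing every entry `⟨r, ψ⟩` by the formula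
`r̄ → ψ` turns each graded rule into a derived rule of Łukasiewicz logic with bookkeeping axioms.
Graded modus ponens uses `¬(q ⊙ r) = r → ¬q` on truth constants, and lifting uses bookkeeping for
`→`. For `q = 1` this derives `1̄ → φ`, and `1̄` is itself an axiom in grade `1`. The resulting
derivation uses modus ponens only, and `1 ⊙ 1 = 1`, so it is a graded proof in which no grade ever
drops below `1`.
-/

open Fml (const)

local infixr:60 " ⇒ " => Fml.imp
local prefix:max "∼" => Fml.neg

namespace UQ

theorem lneg_zero : lneg 0 = 1 := Subtype.ext (sub_zero (1 : ℚ))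

theorem one_lmul (q : UQ) : lmul 1 q = q := by
  refine Subtype.ext ?_
  change max 0 (1 + q.1 - 1) = q.1
  rw [add_sub_cancel_left, max_eq_right q.2.1]

theorem lneg_lmul (q r : UQ) : (lmul q r).lneg = limp r q.lneg := by
  refine Subtype.ext ?_
  change 1 - max 0 (q.1 + r.1 - 1) = min 1 (1 - r.1 + (1 - q.1))
  rw [← min_sub_sub_left]
  ring_nf

end UQ

/-- Derivability in Łukasiewicz logic, over the language with truth constants, from the set `T`
of hypotheses. -/
inductive LukDerivable (T : Set Fml) : Fml → Prop
  | luk {a : Fml} : IsLukAxiom a → LukDerivable T a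
  | hyp {a : Fml} : a ∈ T → LukDerivable T a
  | mp {a b : Fml} : LukDerivable T a → LukDerivable T (a ⇒ b) → LukDerivable T b

namespace LukDerivable

variable {T : Set Fml} {a b c : Fml}

theorem weaken (h : LukDerivable T a) (b : Fml) : LukDerivable T (b ⇒ a) :=
  h.mp (luk (.a1 a b))

theorem precomp (h : LukDerivable T (a ⇒ b)) (c : Fml) : LukDerivable T ((b ⇒ c) ⇒ a ⇒ c) :=
  h.mp (luk (.a2 a b c))

theorem imp_trans (hab : LukDerivable T (a ⇒ b)) (hbc : LukDerivable T (b ⇒ c)) :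
    LukDerivable T (a ⇒ c) :=
  hbc.mp (hab.precomp c)

theorem internal_modus_ponens (a b : Fml) : LukDerivable T (a ⇒ (a ⇒ b) ⇒ b) :=
  (luk (.a1 a (b ⇒ a))).imp_trans (luk (.a3 b a))

theorem imp_swap (h : LukDerivable T (a ⇒ b ⇒ c)) : LukDerivable T (b ⇒ a ⇒ c) :=
  (internal_modus_ponens b c).imp_trans (h.precomp c)

theorem imp_refl (a : Fml) : LukDerivable T (a ⇒ a) :=
  (luk (.a1 a a)).mp (imp_swap (luk (.a1 a (a ⇒ a ⇒ a))))

theorem postcomp (h : LukDerivable T (b ⇒ c)) (a : Fml) : LukDerivable T ((a ⇒ b) ⇒ a ⇒ c) :=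
  h.mp (imp_swap (luk (.a2 a b c)))

theorem neg_imp_imp (a b : Fml) : LukDerivable T (∼a ⇒ a ⇒ b) :=
  (luk (.a1 ∼a ∼b)).imp_trans (luk (.a4 b a))

theorem neg_neg_imp (a : Fml) : LukDerivable T (∼∼a ⇒ a) :=
  have h : LukDerivable T (∼∼a ⇒ (a ⇒ a) ⇒ a) :=
    (neg_imp_imp ∼a ∼(a ⇒ a)).imp_trans (luk (.a4 a (a ⇒ a)))
  (imp_refl a).mp h.imp_swap

theorem imp_neg_neg (a : Fml) : LukDerivable T (a ⇒ ∼∼a) :=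
  (neg_neg_imp ∼a).mp (luk (.a4 ∼∼a a))

theorem imp_contrapose (a b : Fml) : LukDerivable T ((a ⇒ b) ⇒ ∼b ⇒ ∼a) :=
  (((neg_neg_imp a).precomp b).imp_trans ((imp_neg_neg b).postcomp ∼∼a)).imp_trans
    (luk (.a4 ∼a ∼b))

theorem contrapose (h : LukDerivable T (a ⇒ b)) : LukDerivable T (∼b ⇒ ∼a) :=
  h.mp (imp_contrapose a b)

theorem odot_left (h : LukDerivable T (a.odot b)) : LukDerivable T a :=
  h.mp ((neg_imp_imp a ∼b).contrapose.imp_trans (neg_neg_imp a))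

theorem odot_right (h : LukDerivable T (a.odot b)) : LukDerivable T b :=
  h.mp ((contrapose (luk (.a1 ∼b a))).imp_trans (neg_neg_imp b))

theorem eqv_mp (h : LukDerivable T (a.eqv b)) : LukDerivable T (a ⇒ b) := h.odot_left

theorem eqv_mpr (h : LukDerivable T (a.eqv b)) : LukDerivable T (b ⇒ a) :=
  h.odot_left.mp h.odot_right

end LukDerivable

/-- The formulas available in grade `1` in GRPL over `T`: the axioms and the members of `T` of
that grade. -/
def gradeOneTheory (T : Set (UQ × Fml)) : Set Fml :=
  {a | IsGRPLAxiom 1 a ∨ (1, a) ∈ T}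

namespace LukDerivable

variable {T : Set (UQ × Fml)} {a b : Fml}

theorem of_isGRPLAxiom_one (h : IsGRPLAxiom 1 a) : LukDerivable (gradeOneTheory T) a :=
  hyp (.inl h)

theorem const_one : LukDerivable (gradeOneTheory T) (const 1) :=
  of_isGRPLAxiom_one (.const 1)

theorem neg_const_eqv (q : UQ) :
    LukDerivable (gradeOneTheory T) ((∼(const q)).eqv (const q.lneg)) :=
  of_isGRPLAxiom_one (.book_neg q)

theorem const_imp_const_eqv (q r : UQ) :
    LukDerivable (gradeOneTheory T) ((const q ⇒ const r).eqv (const (q.limp r))) :=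
  of_isGRPLAxiom_one (.book_imp q r)

theorem const_zero_imp (a : Fml) : LukDerivable (gradeOneTheory T) (const 0 ⇒ a) := by
  have h : LukDerivable (gradeOneTheory T) (const 1 ⇒ ∼(const 0)) :=
    UQ.lneg_zero ▸ (neg_const_eqv 0).eqv_mpr
  exact (const_one.mp h).mp (neg_imp_imp (const 0) a)

theorem const_lmul_imp {q r : UQ} (ha : LukDerivable (gradeOneTheory T) (const q ⇒ a))
    (hab : LukDerivable (gradeOneTheory T) (const r ⇒ a ⇒ b)) :
    LukDerivable (gradeOneTheory T) (const (q.lmul r) ⇒ b) := by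
  have h_imp : LukDerivable (gradeOneTheory T) (const r ⇒ const q ⇒ b) :=
    hab.imp_trans (ha.precomp b)
  have h_neg : LukDerivable (gradeOneTheory T) (∼b ⇒ const r ⇒ ∼(const q)) :=
    (h_imp.imp_trans (imp_contrapose (const q) b)).imp_swap
  have h_limp : LukDerivable (gradeOneTheory T) (∼b ⇒ const (r.limp q.lneg)) :=
    (h_neg.imp_trans ((neg_const_eqv q).eqv_mp.postcomp (const r))).imp_trans
      (const_imp_const_eqv r q.lneg).eqv_mp
  rw [← UQ.lneg_lmul] at h_limp
  exact (h_limp.imp_trans (neg_const_eqv (q.lmul r)).eqv_mpr).mp (luk (.a4 b _))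

theorem const_limp_imp {q : UQ} (h : LukDerivable (gradeOneTheory T) (const q ⇒ a)) (r : UQ) :
    LukDerivable (gradeOneTheory T) (const (r.limp q) ⇒ const r ⇒ a) :=
  (const_imp_const_eqv r q).eqv_mpr.imp_trans (h.postcomp (const r))

theorem const_imp_of_isGRPLAxiom {q : UQ} (h : IsGRPLAxiom q a) :
    LukDerivable (gradeOneTheory T) (const q ⇒ a) := by
  cases h with
  | luk h => exact (luk h).weaken _
  | const q => exact imp_refl _
  | book_neg q => exact (neg_const_eqv q).weaken _
  | book_imp q r => exact (const_imp_const_eqv q r).weaken _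
  | zero a => exact const_zero_imp a

end LukDerivable

/-- A single inference of GRPL over `T`: the graded formula is an axiom, a member of `T`, or the
conclusion of a rule whose premises occur in the list `L`. -/
inductive IsGRPLStep (T : Set (UQ × Fml)) (L : List (UQ × Fml)) : UQ × Fml → Prop
  | ax {q : UQ} {a : Fml} : IsGRPLAxiom q a → IsGRPLStep T L (q, a)
  | hyp {p : UQ × Fml} : p ∈ T → IsGRPLStep T L p
  | mp {q r : UQ} {a b : Fml} :
      (q, a) ∈ L → (r, a ⇒ b) ∈ L → IsGRPLStep T L (q.lmul r, b)
  | lift {q : UQ} {a : Fml} (r : UQ) : (q, a) ∈ L → IsGRPLStep T L (r.limp q, const r ⇒ a)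

theorem mem_take_iff_exists_get {α : Type*} {l : List α} {i : Fin l.length} {x : α} :
    x ∈ l.take i ↔ ∃ j < i, l.get j = x := by
  simp only [List.mem_take_iff_getElem, min_eq_left i.2.le]
  constructor
  · rintro ⟨j, hj, rfl⟩
    exact ⟨⟨j, hj.trans i.2⟩, hj, rfl⟩
  · rintro ⟨j, hj, rfl⟩
    exact ⟨j, hj, rfl⟩

section GradedProofs

variable {T : Set (UQ × Fml)} {L M : List (UQ × Fml)} {p : UQ × Fml}

theorem IsGRPLStep.mono (h : IsGRPLStep T L p) (hLM : L ⊆ M) : IsGRPLStep T M p := by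
  cases h with
  | ax h => exact .ax h
  | hyp h => exact .hyp h
  | mp ha hab => exact .mp (hLM ha) (hLM hab)
  | lift r ha => exact .lift r (hLM ha)

theorem isGRPLProofFrom_iff_forall_step :
    IsGRPLProofFrom T L ↔ ∀ i : Fin L.length, IsGRPLStep T (L.take i) (L.get i) := by
  refine forall_congr' fun i => ⟨?_, ?_⟩
  · rintro (h | h | ⟨j, k, hj, hk, himp, hgrade⟩ | ⟨j, r, hj, h⟩)
    · exact .ax h
    · exact .hyp h
    · have hmp : IsGRPLStep T (L.take i) ((L.get j).1.lmul (L.get k).1, (L.get i).2) :=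
        .mp (mem_take_iff_exists_get.2 ⟨j, hj, rfl⟩)
          (mem_take_iff_exists_get.2 ⟨k, hk, Prod.ext rfl himp⟩)
      rwa [← hgrade] at hmp
    · exact h ▸ .lift r (mem_take_iff_exists_get.2 ⟨j, hj, rfl⟩)
  · generalize L.get i = p
    rintro (h | h | ⟨ha, hab⟩ | ⟨r, ha⟩)
    · exact .inl h
    · exact .inr (.inl h)
    · obtain ⟨j, hj, hja⟩ := mem_take_iff_exists_get.1 ha
      obtain ⟨k, hk, hkab⟩ := mem_take_iff_exists_get.1 hab
      exact .inr (.inr (.inl ⟨j, k, hj, hk, by rw [hja, hkab], by rw [hja, hkab]⟩))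
    · obtain ⟨j, hj, hja⟩ := mem_take_iff_exists_get.1 ha
      exact .inr (.inr (.inr ⟨j, r, hj, by rw [hja]⟩))

theorem isGRPLProofFrom_nil : IsGRPLProofFrom T [] := fun i => i.elim0

theorem isGRPLProofFrom_concat :
    IsGRPLProofFrom T (L ++ [p]) ↔ IsGRPLProofFrom T L ∧ IsGRPLStep T L p := by
  simp only [isGRPLProofFrom_iff_forall_step, Fin.forall_iff, List.get_eq_getElem]
  constructor
  · intro h
    constructor
    · intro i hi
      have hstep := h i (by grind)
      rwa [List.take_append_of_le_length hi.le, List.getElem_append_left hi] at hstep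
    · simpa using h L.length (by simp)
  · rintro ⟨hL, hp⟩ i hi
    obtain hi | rfl : i < L.length ∨ i = L.length := by grind
    · rw [List.take_append_of_le_length hi.le, List.getElem_append_left hi]
      exact hL i hi
    · simpa using hp

theorem IsGRPLProofFrom.append_s3 (hL : IsGRPLProofFrom T L) (hM : IsGRPLProofFrom T M) :
    IsGRPLProofFrom T (L ++ M) := by
  induction M using List.reverseRecOn with
  | nil => rwa [List.append_nil]
  | append_singleton M p ih =>
    obtain ⟨hM, hp⟩ := isGRPLProofFrom_concat.1 hM
    rw [← List.append_assoc]
    exact isGRPLProofFrom_concat.2 ⟨ih hM, hp.mono (List.subset_append_right L M)⟩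

theorem IsGRPLProofFrom.lukDerivable_const_imp {S : Set (UQ × Fml)}
    (hT : ∀ p ∈ T, LukDerivable (gradeOneTheory S) (const p.1 ⇒ p.2))
    (hL : IsGRPLProofFrom T L) :
    ∀ p ∈ L, LukDerivable (gradeOneTheory S) (const p.1 ⇒ p.2) := by
  induction L using List.reverseRecOn with
  | nil => exact fun p hp => absurd hp List.not_mem_nil
  | append_singleton L p ih =>
    obtain ⟨hprefix, hp⟩ := isGRPLProofFrom_concat.1 hL
    have hderiv := ih hprefix
    refine List.forall_mem_append.2 ⟨hderiv, List.forall_mem_singleton.2 ?_⟩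
    cases hp with
    | ax h => exact .const_imp_of_isGRPLAxiom h
    | hyp h => exact hT p h
    | mp ha hab => exact .const_lmul_imp (hderiv _ ha) (hderiv _ hab)
    | lift r ha => exact .const_limp_imp (hderiv _ ha) r

end GradedProofs

/-- Provability of `⟨1, a⟩` from `T` by a graded proof all of whose entries have grade `1`. -/
def HasGradeOneProof (T : Set (UQ × Fml)) (a : Fml) : Prop :=
  ∃ P : List (UQ × Fml),
    IsGRPLProofFrom T P ∧ P.getLast? = some (1, a) ∧ ∀ p ∈ P, p.1 = (1 : UQ)

namespace HasGradeOneProof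

variable {T : Set (UQ × Fml)} {a b : Fml}

theorem of_step {P : List (UQ × Fml)} (hP : IsGRPLProofFrom T P)
    (hgrade : ∀ p ∈ P, p.1 = (1 : UQ)) (ha : IsGRPLStep T P (1, a)) : HasGradeOneProof T a :=
  ⟨P ++ [(1, a)], isGRPLProofFrom_concat.2 ⟨hP, ha⟩, List.getLast?_concat,
    List.forall_mem_append.2 ⟨hgrade, List.forall_mem_singleton.2 rfl⟩⟩

theorem of_step_nil (ha : IsGRPLStep T [] (1, a)) : HasGradeOneProof T a :=
  of_step isGRPLProofFrom_nil (List.forall_mem_nil _) ha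

theorem mp (ha : HasGradeOneProof T a) (hab : HasGradeOneProof T (a ⇒ b)) :
    HasGradeOneProof T b := by
  obtain ⟨P, hP, hPlast, hPgrade⟩ := ha
  obtain ⟨Q, hQ, hQlast, hQgrade⟩ := hab
  have hstep : IsGRPLStep T (P ++ Q) (UQ.lmul 1 1, b) :=
    .mp (List.mem_append_left Q (List.mem_of_getLast? hPlast))
      (List.mem_append_right P (List.mem_of_getLast? hQlast))
  rw [UQ.one_lmul] at hstep
  exact of_step (hP.append_s3 hQ) (List.forall_mem_append.2 ⟨hPgrade, hQgrade⟩) hstep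

end HasGradeOneProof

theorem LukDerivable.hasGradeOneProof {T : Set (UQ × Fml)} {a : Fml}
    (h : LukDerivable (gradeOneTheory T) a) : HasGradeOneProof T a := by
  induction h with
  | luk h => exact .of_step_nil (.ax (.luk h))
  | hyp h => exact .of_step_nil (h.elim .ax .hyp)
  | mp _ _ iha ihab => exact iha.mp ihab

/-- if `T = { ⟨1,ψ⟩ : ψ ∈ T₀ }` and `T ⊢_GRPL ⟨1,φ⟩`, then there is a graded
proof `P` of `⟨1,φ⟩` from `T` in GRPL in which every graded formula has grade `1`. -/
theorem grade_one_proof_exists (T₀ : Set Fml) (φ : Fml)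
    (h : GRPLProv ((fun ψ : Fml => ((1 : UQ), ψ)) '' T₀) (1, φ)) :
    ∃ P : List (UQ × Fml),
      IsGRPLProofFrom ((fun ψ : Fml => ((1 : UQ), ψ)) '' T₀) P ∧
      P.getLast? = some (1, φ) ∧ ∀ p ∈ P, p.1 = (1 : UQ) := by
  obtain ⟨L, hL, hlast⟩ := h
  set T : Set (UQ × Fml) := (fun ψ : Fml => ((1 : UQ), ψ)) '' T₀
  have hT : ∀ p ∈ T, LukDerivable (gradeOneTheory T) (const p.1 ⇒ p.2) := by
    rintro _ ⟨ψ, hψ, rfl⟩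
    exact (LukDerivable.hyp (.inr ⟨ψ, hψ, rfl⟩)).weaken _
  have hφ : LukDerivable (gradeOneTheory T) (const 1 ⇒ φ) :=
    hL.lukDerivable_const_imp hT _ (List.mem_of_getLast? hlast)
  exact (LukDerivable.const_one.mp hφ).hasGradeOneProof
end

section
/- Finite strong standard completeness for Ł: if Γ is a finite set of formulas and φ a formula of the language of Ł, then Γ ⊢_Ł φ if and only if every assignment into the standard MV-algebra [0,1]_Ł that gives value 1 to all formulas of Γ gives value 1 to φ. -/
/-!
A theory not proving `φ` extends, by Zorn's lemma and proof by cases on prelinearity, to a linear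
theory not proving `φ`; its Lindenbaum algebra is a Wajsberg chain refuting `φ`. By Chang's
construction the chain is the unit interval `[0, u]` of a linearly ordered abelian group. Only
finitely many elements of this group matter for finitely many formulas, and on a finite set the
order of such a group is preserved by some homomorphism to `ℝ`: by Hahn's embedding theorem the
group is a group of Hahn series, and finitely many positive series stay positive when their
coordinates are summed with sufficiently fast decreasing weights. Dividing by the image of `u`
gives the required assignment into `[0, 1]`.
-/

/-- Formulas of propositional Łukasiewicz logic Ł: propositional variables,
negation and implication. -/
inductive LFml : Type
  | var : ℕ → LFml
  | neg : LFml → LFml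
  | imp : LFml → LFml → LFml

/-- Provability in Łukasiewicz logic Ł: axiom schemata (A1)-(A4), hypotheses, and
modus ponens as the only rule. -/
inductive LukProv (T : Set LFml) : LFml → Prop
  | a1 (φ ψ : LFml) : LukProv T (φ.imp (ψ.imp φ))
  | a2 (φ ψ χ : LFml) : LukProv T ((φ.imp ψ).imp ((ψ.imp χ).imp (φ.imp χ)))
  | a3 (φ ψ : LFml) : LukProv T (((φ.imp ψ).imp ψ).imp ((ψ.imp φ).imp φ))
  | a4 (φ ψ : LFml) : LukProv T ((φ.neg.imp ψ.neg).imp (ψ.imp φ))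
  | hyp {φ : LFml} : φ ∈ T → LukProv T φ
  | mp {φ ψ : LFml} : LukProv T φ → LukProv T (φ.imp ψ) → LukProv T ψ

/-- Evaluation in the standard MV-algebra `[0,1]_Ł`:
`x →_Ł y = min(1, 1−x+y)` and `¬_Ł x = 1−x`. -/
noncomputable def leval (v : ℕ → ℝ) : LFml → ℝ
  | LFml.var n => v n
  | LFml.neg φ => 1 - leval v φ
  | LFml.imp φ ψ => min 1 (1 - leval v φ + leval v ψ)

open Filter

namespace LFml

/-- The weak disjunction `φ ∨ ψ` of Ł, interpreted as the maximum in `[0,1]`. -/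
abbrev or (φ ψ : LFml) : LFml := (φ.imp ψ).imp ψ

end LFml

namespace LukProv

variable {T : Set LFml} {φ ψ χ : LFml}

theorem imp_trans (h₁ : LukProv T (φ.imp ψ)) (h₂ : LukProv T (ψ.imp χ)) :
    LukProv T (φ.imp χ) :=
  mp h₂ (mp h₁ (a2 φ ψ χ))

theorem imp_or_left (φ ψ : LFml) : LukProv T (φ.imp (φ.or ψ)) :=
  imp_trans (a1 φ (ψ.imp φ)) (a3 ψ φ)

theorem or_inl (h : LukProv T φ) : LukProv T (φ.or ψ) :=
  mp h (imp_or_left φ ψ)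

theorem imp_self (φ : LFml) : LukProv T (φ.imp φ) :=
  imp_trans (a1 φ (φ.imp (φ.imp φ))) (or_inl (a1 φ φ))

theorem imp_imp_imp_right (χ : LFml) (h : LukProv T (φ.imp ψ)) :
    LukProv T ((ψ.imp χ).imp (φ.imp χ)) :=
  mp h (a2 φ ψ χ)

theorem imp_imp_imp_left (χ : LFml) (h : LukProv T (φ.imp ψ)) :
    LukProv T ((χ.imp φ).imp (χ.imp ψ)) :=
  imp_trans (a2 χ φ ψ) (or_inl h)

theorem neg_neg_imp (φ : LFml) : LukProv T (φ.neg.neg.imp φ) := by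
  let θ := φ.imp (φ.imp φ)
  have h : LukProv T (φ.neg.neg.imp (θ.imp φ)) :=
    imp_trans (imp_trans (a1 φ.neg.neg θ.neg.neg) (a4 θ.neg φ.neg)) (a4 φ θ)
  exact imp_trans h (or_inl (a1 φ φ))

theorem imp_neg_neg (φ : LFml) : LukProv T (φ.imp φ.neg.neg) :=
  mp (neg_neg_imp φ.neg) (a4 φ.neg.neg φ)

theorem neg_imp_neg (h : LukProv T (φ.imp ψ)) : LukProv T (ψ.neg.imp φ.neg) :=
  mp (imp_trans (neg_neg_imp φ) (imp_trans h (imp_neg_neg ψ))) (a4 φ.neg ψ.neg)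

theorem mono {S : Set LFml} (hST : S ⊆ T) (h : LukProv S φ) : LukProv T φ := by
  induction h with
  | a1 => exact a1 _ _
  | a2 => exact a2 _ _ _
  | a3 => exact a3 _ _
  | a4 => exact a4 _ _
  | hyp h => exact hyp (hST h)
  | mp _ _ ih₁ ih₂ => exact mp ih₁ ih₂

theorem exists_mem_of_sUnion {C : Set (Set LFml)} (hC : DirectedOn (· ⊆ ·) C) (hne : C.Nonempty)
    (h : LukProv (⋃₀ C) φ) : ∃ S ∈ C, LukProv S φ := by
  obtain ⟨S₀, hS₀⟩ := hne
  induction h with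
  | a1 => exact ⟨S₀, hS₀, a1 _ _⟩
  | a2 => exact ⟨S₀, hS₀, a2 _ _ _⟩
  | a3 => exact ⟨S₀, hS₀, a3 _ _⟩
  | a4 => exact ⟨S₀, hS₀, a4 _ _⟩
  | hyp h =>
    obtain ⟨S, hS, h⟩ := h
    exact ⟨S, hS, hyp h⟩
  | mp _ _ ih₁ ih₂ =>
    obtain ⟨S₁, hS₁, h₁⟩ := ih₁
    obtain ⟨S₂, hS₂, h₂⟩ := ih₂
    obtain ⟨S, hS, hS₁S, hS₂S⟩ := hC S₁ hS₁ S₂ hS₂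
    exact ⟨S, hS, mp (mono hS₁S h₁) (mono hS₂S h₂)⟩

theorem or_mp (h₁ : LukProv T (φ.or χ)) (h₂ : LukProv T ((φ.imp ψ).or χ)) :
    LukProv T (ψ.or χ) := by
  have h : LukProv T ((φ.imp ψ).imp (ψ.or χ)) :=
    imp_trans (a2 φ ψ χ) (imp_imp_imp_left (ψ.imp χ) h₁)
  have h_or : LukProv T ((ψ.or χ).or χ) := mp h₂ (imp_imp_imp_right χ (imp_imp_imp_right χ h))
  exact mp h_or (imp_imp_imp_right χ (imp_or_left (ψ.imp χ) χ))

theorem or_of_insert (h_or : LukProv T (ψ.or χ)) (h : LukProv (insert ψ T) φ) :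
    LukProv T (φ.or χ) := by
  induction h with
  | a1 => exact or_inl (a1 _ _)
  | a2 => exact or_inl (a2 _ _ _)
  | a3 => exact or_inl (a3 _ _)
  | a4 => exact or_inl (a4 _ _)
  | hyp h =>
    rcases h with rfl | h
    · exact h_or
    · exact or_inl (hyp h)
  | mp _ _ ih₁ ih₂ => exact or_mp ih₁ ih₂

theorem of_or_of_insert (h_or : LukProv T (ψ.or χ)) (hψ : LukProv (insert ψ T) φ)
    (hχ : LukProv (insert χ T) φ) : LukProv T φ := by
  have h : LukProv T (χ.or φ) := mp (or_of_insert h_or hψ) (a3 φ χ)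
  exact mp (imp_self φ) (or_of_insert h hχ)

end LukProv

theorem leval_mem_Icc {v : ℕ → ℝ} (hv : ∀ n, v n ∈ Set.Icc (0 : ℝ) 1) (φ : LFml) :
    leval v φ ∈ Set.Icc (0 : ℝ) 1 := by
  induction φ with
  | var n => exact hv n
  | neg φ ih => exact ⟨sub_nonneg.2 ih.2, sub_le_self 1 ih.1⟩
  | imp φ ψ ihφ ihψ =>
    exact ⟨le_min zero_le_one (add_nonneg (sub_nonneg.2 ihφ.2) ihψ.1), min_le_left _ _⟩

theorem LukProv.leval_eq_one {T : Set LFml} {φ : LFml} (h : LukProv T φ) {v : ℕ → ℝ}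
    (hv : ∀ n, v n ∈ Set.Icc (0 : ℝ) 1) (hT : ∀ ψ ∈ T, leval v ψ = 1) : leval v φ = 1 := by
  have hmem := leval_mem_Icc hv
  simp only [Set.mem_Icc] at hmem
  induction h with
  | a1 φ ψ => grind [leval, hmem φ, hmem ψ]
  | a2 φ ψ χ => grind [leval, hmem φ, hmem ψ, hmem χ]
  | a3 φ ψ => grind [leval, hmem φ, hmem ψ]
  | a4 φ ψ => grind [leval, hmem φ, hmem ψ]
  | hyp h => exact hT _ h
  | @mp φ ψ _ _ ihφ ihimp => grind [leval, hmem φ, hmem ψ]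

/-- Wajsberg algebras, the presentation of MV-algebras by implication and negation; the axioms are
the algebraic counterparts of (A1)–(A4). -/
class WajsbergAlgebra (A : Type*) extends HImp A, Compl A, Top A where
  top_himp (x : A) : ⊤ ⇨ x = x
  himp_himp_himp_himp (x y z : A) : (x ⇨ y) ⇨ (y ⇨ z) ⇨ x ⇨ z = ⊤
  himp_himp_comm (x y : A) : (x ⇨ y) ⇨ y = (y ⇨ x) ⇨ x
  compl_himp_compl_himp (x y : A) : (xᶜ ⇨ yᶜ) ⇨ y ⇨ x = ⊤

namespace WajsbergAlgebra

section WajsbergAlgebra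

variable {A : Type*} [WajsbergAlgebra A] {a b c x y : A}

protected theorem himp_self (x : A) : x ⇨ x = ⊤ := by
  have h := himp_himp_himp_himp ⊤ ⊤ x
  rwa [top_himp, top_himp, top_himp] at h

instance : PartialOrder A where
  le x y := x ⇨ y = ⊤
  le_refl := WajsbergAlgebra.himp_self
  le_trans x y z hxy hyz := by
    have h := himp_himp_himp_himp x y z
    rwa [hxy, hyz, top_himp, top_himp] at h
  le_antisymm x y hxy hyx := by
    have h := himp_himp_comm x y
    rwa [hxy, hyx, top_himp, top_himp, eq_comm] at h

theorem le_iff_himp_eq_top : x ≤ y ↔ x ⇨ y = ⊤ := Iff.rfl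

instance : OrderTop A where
  le_top x := by
    have h := himp_himp_himp_himp ⊤ x ⊤
    rwa [top_himp, top_himp, himp_himp_comm, top_himp, WajsbergAlgebra.himp_self] at h

theorem himp_le_himp_right (h : x ≤ y) (z : A) : y ⇨ z ≤ x ⇨ z := by
  have := himp_himp_himp_himp x y z
  rwa [h, top_himp] at this

theorem le_himp (x y : A) : x ≤ y ⇨ x := by
  simpa only [top_himp] using himp_le_himp_right (le_top (a := y)) x

theorem le_himp_himp (x y : A) : x ≤ (x ⇨ y) ⇨ y := by
  have h := himp_himp_himp_himp ⊤ x y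
  rwa [top_himp, top_himp] at h

theorem himp_himp_of_le (h : y ≤ x) : (x ⇨ y) ⇨ y = x := by
  rw [himp_himp_comm, h, top_himp]

theorem himp_himp_himp (x y : A) : ((x ⇨ y) ⇨ y) ⇨ y = x ⇨ y :=
  himp_himp_of_le (le_himp y x)

theorem himp_left_comm (x y z : A) : x ⇨ y ⇨ z = y ⇨ x ⇨ z := by
  have h (x y : A) : x ⇨ y ⇨ z ≤ y ⇨ x ⇨ z :=
    le_trans (himp_himp_himp_himp x (y ⇨ z) z) (himp_le_himp_right (le_himp_himp y z) _)
  exact le_antisymm (h x y) (h y x)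

theorem himp_le_himp_left (h : x ≤ y) (z : A) : z ⇨ x ≤ z ⇨ y := by
  have := himp_himp_himp_himp z x y
  rwa [h, top_himp] at this

private theorem compl_compl_le (x : A) : xᶜᶜ ≤ x :=
  calc xᶜᶜ ≤ (⊤ : A)ᶜᶜ ⇨ xᶜᶜ := le_himp _ _
    _ ≤ xᶜ ⇨ (⊤ : A)ᶜ := compl_himp_compl_himp _ _
    _ ≤ ⊤ ⇨ x := compl_himp_compl_himp _ _
    _ = x := top_himp x

protected theorem compl_compl (x : A) : xᶜᶜ = x := by
  refine le_antisymm (compl_compl_le x) ?_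
  have h := compl_himp_compl_himp xᶜᶜ x
  rwa [compl_compl_le xᶜ, top_himp] at h

theorem compl_himp_compl (x y : A) : xᶜ ⇨ yᶜ = y ⇨ x := by
  refine le_antisymm (compl_himp_compl_himp x y) ?_
  have h := compl_himp_compl_himp yᶜ xᶜ
  rwa [WajsbergAlgebra.compl_compl, WajsbergAlgebra.compl_compl] at h

theorem himp_compl_comm (x y : A) : x ⇨ yᶜ = y ⇨ xᶜ := by
  rw [← compl_himp_compl, WajsbergAlgebra.compl_compl]

theorem compl_himp_comm (x y : A) : xᶜ ⇨ y = yᶜ ⇨ x := by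
  rw [← compl_himp_compl, WajsbergAlgebra.compl_compl]

theorem le_compl_comm : x ≤ yᶜ ↔ y ≤ xᶜ := by
  rw [le_iff_himp_eq_top, himp_compl_comm, le_iff_himp_eq_top]

theorem compl_le_comm : xᶜ ≤ y ↔ yᶜ ≤ x := by
  rw [le_iff_himp_eq_top, compl_himp_comm, le_iff_himp_eq_top]

instance : BoundedOrder A where
  bot := ⊤ᶜ
  bot_le _ := compl_le_comm.2 le_top

protected theorem compl_top : (⊤ : A)ᶜ = ⊥ := rfl

protected theorem compl_bot : (⊥ : A)ᶜ = ⊤ := WajsbergAlgebra.compl_compl ⊤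

protected theorem himp_bot (x : A) : x ⇨ ⊥ = xᶜ := by
  rw [← WajsbergAlgebra.compl_top, himp_compl_comm, top_himp]

-- With `s = (x ⇨ y) ⇨ y`, the join of `x` and `y`, one has `x ⇨ y = s ⇨ y` and `y ⇨ x = s ⇨ x`.
theorem himp_himp_himp_comm (x y : A) : (x ⇨ y) ⇨ y ⇨ x = y ⇨ x := by
  let s := (x ⇨ y) ⇨ y
  have hsy : s ⇨ y = x ⇨ y := himp_himp_himp x y
  have hsx : s ⇨ x = y ⇨ x := by
    rw [show s = (y ⇨ x) ⇨ x from himp_himp_comm x y, himp_himp_himp]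
  calc (x ⇨ y) ⇨ y ⇨ x = (yᶜ ⇨ sᶜ) ⇨ xᶜ ⇨ sᶜ := by
        rw [compl_himp_compl, compl_himp_compl, hsy, hsx]
    _ = xᶜ ⇨ (sᶜ ⇨ yᶜ) ⇨ yᶜ := by rw [himp_left_comm, himp_himp_comm]
    _ = xᶜ ⇨ yᶜ := by rw [compl_himp_compl s y, le_himp y (x ⇨ y), top_himp]
    _ = y ⇨ x := compl_himp_compl x y

theorem prelinearity (x y : A) : ((x ⇨ y) ⇨ y ⇨ x) ⇨ y ⇨ x = ⊤ := by
  rw [himp_himp_himp_comm, WajsbergAlgebra.himp_self]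

/-- The strong disjunction `x ⊕ y` of an MV-algebra, which is `min 1 (x + y)` in `[0,1]`. -/
def oplus (x y : A) : A := xᶜ ⇨ y

/-- The strong conjunction `x ⊙ y` of an MV-algebra, which is `max 0 (x + y - 1)` in `[0,1]`. -/
def otimes (x y : A) : A := (x ⇨ yᶜ)ᶜ

local infixl:65 " ⊕ₘ " => oplus
local infixl:70 " ⊙ₘ " => otimes

theorem compl_oplus (x y : A) : (x ⊕ₘ y)ᶜ = xᶜ ⊙ₘ yᶜ := by
  rw [oplus, otimes, WajsbergAlgebra.compl_compl]

theorem compl_otimes (x y : A) : (x ⊙ₘ y)ᶜ = xᶜ ⊕ₘ yᶜ := by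
  rw [oplus, otimes, WajsbergAlgebra.compl_compl, WajsbergAlgebra.compl_compl]

theorem compl_injective : Function.Injective (compl : A → A) :=
  Function.LeftInverse.injective WajsbergAlgebra.compl_compl

theorem oplus_comm (x y : A) : x ⊕ₘ y = y ⊕ₘ x := compl_himp_comm x y

theorem otimes_comm (x y : A) : x ⊙ₘ y = y ⊙ₘ x := by
  rw [otimes, himp_compl_comm, otimes]

theorem oplus_assoc (x y z : A) : x ⊕ₘ y ⊕ₘ z = x ⊕ₘ (y ⊕ₘ z) := by
  rw [oplus_comm (x ⊕ₘ y) z, oplus_comm y z]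
  exact himp_left_comm _ _ _

theorem otimes_assoc (x y z : A) : x ⊙ₘ y ⊙ₘ z = x ⊙ₘ (y ⊙ₘ z) :=
  compl_injective (by simp only [compl_otimes, oplus_assoc])

theorem bot_oplus (x : A) : ⊥ ⊕ₘ x = x := by
  rw [oplus, WajsbergAlgebra.compl_bot, top_himp]

theorem compl_oplus_self (x : A) : xᶜ ⊕ₘ x = ⊤ := by
  rw [oplus, WajsbergAlgebra.compl_compl, WajsbergAlgebra.himp_self]

theorem compl_otimes_self (x : A) : xᶜ ⊙ₘ x = ⊥ := by
  rw [otimes, WajsbergAlgebra.himp_self, WajsbergAlgebra.compl_top]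

theorem oplus_eq_top_iff : x ⊕ₘ y = ⊤ ↔ xᶜ ≤ y := Iff.rfl

theorem le_oplus_right (x y : A) : y ≤ x ⊕ₘ y := le_himp _ _

theorem otimes_le_right (x y : A) : x ⊙ₘ y ≤ y := by
  rw [otimes, compl_le_comm]
  exact le_himp _ _

theorem oplus_le_oplus_right (h : x ≤ y) (z : A) : x ⊕ₘ z ≤ y ⊕ₘ z := by
  rw [oplus_comm x, oplus_comm y]
  exact himp_le_himp_left h _

theorem otimes_le_otimes_right (h : x ≤ y) (z : A) : x ⊙ₘ z ≤ y ⊙ₘ z := by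
  rw [otimes, otimes, le_iff_himp_eq_top, compl_himp_compl]
  exact himp_le_himp_right h _

theorem himp_otimes_of_compl_le (h : yᶜ ≤ x) : y ⇨ (x ⊙ₘ y) = x := by
  rw [otimes, himp_compl_comm, himp_himp_of_le h]

theorem himp_otimes_self_of_le (h : y ≤ x) : (x ⇨ y) ⊙ₘ x = y := by
  apply compl_injective
  rw [otimes, WajsbergAlgebra.compl_compl, ← compl_himp_compl y x, himp_himp_of_le]
  rwa [le_iff_himp_eq_top, compl_himp_compl]

-- Both sides are the truncation of `a + b + c - 1` at `0`.
theorem oplus_otimes_of_le_compl (hab : a ≤ bᶜ) (hbc : b ≤ cᶜ) :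
    (a ⊕ₘ b) ⊙ₘ c = a ⊙ₘ (b ⊕ₘ c) := by
  apply compl_injective
  calc ((a ⊕ₘ b) ⊙ₘ c)ᶜ = (aᶜ ⇨ b) ⇨ cᶜ := WajsbergAlgebra.compl_compl _
    _ = (aᶜ ⇨ b) ⇨ (cᶜ ⇨ b) ⇨ b := by rw [himp_himp_of_le hbc]
    _ = (cᶜ ⇨ b) ⇨ aᶜ := by rw [himp_left_comm, himp_himp_of_le (le_compl_comm.1 hab)]
    _ = a ⇨ (b ⊕ₘ c)ᶜ := by rw [himp_compl_comm, oplus_comm, oplus]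
    _ = (a ⊙ₘ (b ⊕ₘ c))ᶜ := (WajsbergAlgebra.compl_compl _).symm

theorem otimes_oplus_of_oplus_eq_top (hab : a ⊕ₘ b = ⊤) (hbc : b ⊕ₘ c = ⊤) :
    a ⊙ₘ b ⊕ₘ c = a ⊕ₘ (b ⊙ₘ c) := by
  apply compl_injective
  simp only [compl_oplus, compl_otimes]
  apply oplus_otimes_of_le_compl <;> rwa [WajsbergAlgebra.compl_compl]

-- Both sides are `a + b + c - 1`, which lies between `0` and `1`.
theorem oplus_otimes_of_le_compl_of_oplus_eq_top (hab : a ≤ bᶜ) (hbc : b ⊕ₘ c = ⊤) :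
    (a ⊕ₘ b) ⊙ₘ c = a ⊕ₘ (b ⊙ₘ c) := by
  have h_himp : c ⇨ (a ⊕ₘ (b ⊙ₘ c)) = a ⊕ₘ b := by
    rw [oplus, himp_left_comm, himp_otimes_of_compl_le (compl_le_comm.1 hbc), oplus]
  have h_le : a ⊕ₘ (b ⊙ₘ c) ≤ c :=
    calc a ⊕ₘ (b ⊙ₘ c) ≤ b ⇨ (b ⊙ₘ c) := himp_le_himp_right (le_compl_comm.1 hab) _
      _ = c := by rw [otimes_comm, himp_otimes_of_compl_le hbc]
  rw [← h_himp, himp_otimes_self_of_le h_le]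

end WajsbergAlgebra

/-- Evaluation of formulas in a Wajsberg algebra. -/
def eval {A : Type*} [WajsbergAlgebra A] (w : ℕ → A) : LFml → A
  | .var n => w n
  | .neg φ => (eval w φ)ᶜ
  | .imp φ ψ => eval w φ ⇨ eval w ψ

end WajsbergAlgebra

/-- Interprovability over a theory, the congruence defining its Lindenbaum algebra. -/
def lindenbaumSetoid (T : Set LFml) : Setoid LFml where
  r φ ψ := LukProv T (φ.imp ψ) ∧ LukProv T (ψ.imp φ)
  iseqv :=
    { refl φ := ⟨.imp_self φ, .imp_self φ⟩
      symm h := h.symm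
      trans h₁ h₂ := ⟨h₁.1.imp_trans h₂.1, h₂.2.imp_trans h₁.2⟩ }

/-- The Lindenbaum algebra of a theory: formulas up to interprovability. -/
def LindenbaumAlgebra (T : Set LFml) : Type := Quotient (lindenbaumSetoid T)

namespace LindenbaumAlgebra

variable {T : Set LFml} {φ ψ : LFml}

/-- The class of a formula in the Lindenbaum algebra. -/
def mk (T : Set LFml) (φ : LFml) : LindenbaumAlgebra T := Quotient.mk (lindenbaumSetoid T) φ

theorem mk_eq_mk : mk T φ = mk T ψ ↔ LukProv T (φ.imp ψ) ∧ LukProv T (ψ.imp φ) :=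
  Quotient.eq

instance : HImp (LindenbaumAlgebra T) where
  himp := Quotient.map₂ LFml.imp fun _ φ' hφ ψ _ hψ =>
    ⟨(hφ.2.imp_imp_imp_right ψ).imp_trans (hψ.1.imp_imp_imp_left φ'),
      (hψ.2.imp_imp_imp_left φ').imp_trans (hφ.1.imp_imp_imp_right ψ)⟩

instance : Compl (LindenbaumAlgebra T) where
  compl := Quotient.map LFml.neg fun _ _ h => ⟨h.2.neg_imp_neg, h.1.neg_imp_neg⟩

instance : Top (LindenbaumAlgebra T) where
  top := mk T ((LFml.var 0).imp (LFml.var 0))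

theorem mk_imp (φ ψ : LFml) : mk T (φ.imp ψ) = mk T φ ⇨ mk T ψ := rfl

theorem mk_neg (φ : LFml) : mk T φ.neg = (mk T φ)ᶜ := rfl

theorem mk_eq_top : mk T φ = ⊤ ↔ LukProv T φ :=
  mk_eq_mk.trans ⟨fun h => .mp (.imp_self _) h.2, fun h => ⟨.mp (.imp_self _) (.a1 _ _),
    .mp h (.a1 _ _)⟩⟩

instance : WajsbergAlgebra (LindenbaumAlgebra T) where
  top_himp := by
    rintro ⟨φ⟩
    exact mk_eq_mk.2 ⟨.or_inl (.imp_self _), .a1 _ _⟩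
  himp_himp_himp_himp := by
    rintro ⟨φ⟩ ⟨ψ⟩ ⟨χ⟩
    exact mk_eq_top.2 (.a2 φ ψ χ)
  himp_himp_comm := by
    rintro ⟨φ⟩ ⟨ψ⟩
    exact mk_eq_mk.2 ⟨.a3 φ ψ, .a3 ψ φ⟩
  compl_himp_compl_himp := by
    rintro ⟨φ⟩ ⟨ψ⟩
    exact mk_eq_top.2 (.a4 φ ψ)

theorem eval_mk_var (φ : LFml) :
    WajsbergAlgebra.eval (fun n => mk T (.var n)) φ = mk T φ := by
  induction φ with
  | var n => rfl
  | neg φ ih => rw [WajsbergAlgebra.eval, ih, mk_neg]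
  | imp φ ψ ihφ ihψ => rw [WajsbergAlgebra.eval, ihφ, ihψ, mk_imp]

end LindenbaumAlgebra

theorem LukProv.prelinearity {T : Set LFml} (φ ψ : LFml) :
    LukProv T ((φ.imp ψ).or (ψ.imp φ)) :=
  LindenbaumAlgebra.mk_eq_top.1
    (WajsbergAlgebra.prelinearity (LindenbaumAlgebra.mk T φ) (LindenbaumAlgebra.mk T ψ))

/-- Linear (also called complete) theories: any two formulas are comparable under provable
implication. -/
def IsLinearTheory (T : Set LFml) : Prop :=
  ∀ φ ψ : LFml, LukProv T (φ.imp ψ) ∨ LukProv T (ψ.imp φ)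

theorem exists_maximal_not_lukProv {Γ : Set LFml} {φ : LFml} (h : ¬ LukProv Γ φ) :
    ∃ T, Γ ⊆ T ∧ Maximal (fun S => ¬ LukProv S φ) T := by
  refine zorn_subset_nonempty {S | ¬ LukProv S φ} (fun C hC hchain hne => ?_) Γ h
  refine ⟨⋃₀ C, fun hprov => ?_, fun S hS => Set.subset_sUnion_of_mem hS⟩
  obtain ⟨S, hS, hprov⟩ := LukProv.exists_mem_of_sUnion hchain.directedOn hne hprov
  exact hC hS hprov

theorem isLinearTheory_of_maximal {T : Set LFml} {φ : LFml}
    (hT : Maximal (fun S => ¬ LukProv S φ) T) : IsLinearTheory T := by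
  have prov_insert {ψ : LFml} (hψ : ¬ LukProv T ψ) : LukProv (insert ψ T) φ := by
    by_contra h
    exact hψ (.hyp (hT.2 h (Set.subset_insert ψ T) (Set.mem_insert ψ T)))
  intro ψ χ
  by_contra! h
  exact hT.1 (.of_or_of_insert (.prelinearity ψ χ) (prov_insert h.1) (prov_insert h.2))

/-- Nontrivial linearly ordered Wajsberg algebras. -/
class WajsbergChain (A : Type*) extends WajsbergAlgebra A, Nontrivial A where
  himp_eq_top_or (x y : A) : x ⇨ y = ⊤ ∨ y ⇨ x = ⊤

/-- The Lindenbaum algebra of a linear theory, as a Wajsberg chain. -/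
abbrev LindenbaumAlgebra.wajsbergChain {T : Set LFml} {φ : LFml} (hφ : ¬ LukProv T φ)
    (hT : IsLinearTheory T) : WajsbergChain (LindenbaumAlgebra T) where
  exists_pair_ne := ⟨mk T φ, ⊤, mt mk_eq_top.1 hφ⟩
  himp_eq_top_or := by
    rintro ⟨ψ⟩ ⟨χ⟩
    exact (hT ψ χ).imp mk_eq_top.2 mk_eq_top.2

namespace WajsbergAlgebra

local infixl:65 " ⊕ₘ " => oplus
local infixl:70 " ⊙ₘ " => otimes

variable {A : Type*} [WajsbergChain A]

noncomputable instance : LinearOrder A where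
  __ := (inferInstance : PartialOrder A)
  le_total := WajsbergChain.himp_eq_top_or
  toDecidableLE := Classical.decRel _

theorem le_compl_of_oplus_ne_top {x y : A} (h : x ⊕ₘ y ≠ ⊤) : x ≤ yᶜ := by
  rw [oplus_comm] at h
  exact (le_total x yᶜ).resolve_right h

/-- Chang's group of a Wajsberg chain, whose unit interval is the chain. An element is encoded by
its integer part and its fractional part, the latter in the chain without its top element. -/
@[ext]
structure ChangGroup (A : Type*) [WajsbergChain A] where
  floor : ℤ
  fract : A
  fract_ne_top : fract ≠ ⊤

namespace ChangGroup

open Classical in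
noncomputable instance : Add (ChangGroup A) where
  add p q :=
    { floor := p.floor + q.floor + if p.fract ⊕ₘ q.fract = ⊤ then 1 else 0
      fract := if p.fract ⊕ₘ q.fract = ⊤ then p.fract ⊙ₘ q.fract else p.fract ⊕ₘ q.fract
      fract_ne_top := by
        split_ifs with h
        · exact ne_top_of_le_ne_top q.fract_ne_top (otimes_le_right _ _)
        · exact h }

instance : Zero (ChangGroup A) where
  zero := ⟨0, ⊥, bot_ne_top⟩

open Classical in
noncomputable instance : Neg (ChangGroup A) where
  neg p :=
    { floor := -p.floor - if p.fract = ⊥ then 0 else 1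
      fract := if p.fract = ⊥ then ⊥ else p.fractᶜ
      fract_ne_top := by
        split_ifs with h
        · exact bot_ne_top
        · rwa [← WajsbergAlgebra.compl_bot, compl_injective.ne_iff] }

theorem floor_zero : (0 : ChangGroup A).floor = 0 := rfl

theorem fract_zero : (0 : ChangGroup A).fract = ⊥ := rfl

open Classical in
theorem floor_add (p q : ChangGroup A) :
    (p + q).floor = p.floor + q.floor + if p.fract ⊕ₘ q.fract = ⊤ then 1 else 0 := rfl

open Classical in
theorem fract_add (p q : ChangGroup A) :
    (p + q).fract = if p.fract ⊕ₘ q.fract = ⊤ then p.fract ⊙ₘ q.fract else p.fract ⊕ₘ q.fract :=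
  rfl

open Classical in
theorem floor_neg (p : ChangGroup A) :
    (-p).floor = -p.floor - if p.fract = ⊥ then 0 else 1 := rfl

open Classical in
theorem fract_neg (p : ChangGroup A) :
    (-p).fract = if p.fract = ⊥ then ⊥ else p.fractᶜ := rfl

protected theorem add_comm (p q : ChangGroup A) : p + q = q + p := by
  ext
  · rw [floor_add, floor_add, oplus_comm, add_comm p.floor]
  · rw [fract_add, fract_add, oplus_comm, otimes_comm]

protected theorem zero_add (p : ChangGroup A) : 0 + p = p := by
  ext
  · rw [floor_add, fract_zero, bot_oplus, if_neg p.fract_ne_top, floor_zero, zero_add, add_zero]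
  · rw [fract_add, fract_zero, bot_oplus, if_neg p.fract_ne_top]

protected theorem neg_add_cancel (p : ChangGroup A) : -p + p = 0 := by
  by_cases h : p.fract = ⊥
  · ext
    · simp [floor_add, floor_neg, fract_neg, h, bot_oplus, floor_zero]
    · simp [fract_add, fract_neg, h, bot_oplus, fract_zero]
  · ext
    · rw [floor_add, floor_neg, fract_neg, if_neg h, if_neg h, if_pos (compl_oplus_self _),
        floor_zero]
      ring
    · simp [fract_add, fract_neg, h, compl_oplus_self, compl_otimes_self, fract_zero]

theorem add_assoc_of_ne_top_of_eq_top {p q r : ChangGroup A} (hpq : p.fract ⊕ₘ q.fract ≠ ⊤)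
    (hqr : q.fract ⊕ₘ r.fract = ⊤) : p + q + r = p + (q + r) := by
  have h := oplus_otimes_of_le_compl_of_oplus_eq_top (le_compl_of_oplus_ne_top hpq) hqr
  have h_carry : p.fract ⊕ₘ q.fract ⊕ₘ r.fract = ⊤ := by
    rw [oplus_assoc, hqr]
    exact (le_top : p.fractᶜ ≤ ⊤)
  have h_no_carry : p.fract ⊕ₘ (q.fract ⊙ₘ r.fract) ≠ ⊤ := by
    rw [← h]
    exact ne_top_of_le_ne_top r.fract_ne_top (otimes_le_right _ _)
  ext
  · simp only [floor_add, fract_add, if_pos hqr, if_neg hpq, if_pos h_carry, if_neg h_no_carry]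
    ring
  · simp only [fract_add, if_pos hqr, if_neg hpq, if_pos h_carry, if_neg h_no_carry, h]

theorem add_assoc_of_eq_top_of_eq_top {p q r : ChangGroup A} (hpq : p.fract ⊕ₘ q.fract = ⊤)
    (hqr : q.fract ⊕ₘ r.fract = ⊤) : p + q + r = p + (q + r) := by
  have h := otimes_oplus_of_oplus_eq_top hpq hqr
  ext
  · simp only [floor_add, fract_add, if_pos hpq, if_pos hqr, h]
    ring
  · simp only [fract_add, if_pos hpq, if_pos hqr, h, otimes_assoc]

theorem add_assoc_of_ne_top_of_ne_top {p q r : ChangGroup A} (hpq : p.fract ⊕ₘ q.fract ≠ ⊤)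
    (hqr : q.fract ⊕ₘ r.fract ≠ ⊤) : p + q + r = p + (q + r) := by
  have h := oplus_otimes_of_le_compl (le_compl_of_oplus_ne_top hpq) (le_compl_of_oplus_ne_top hqr)
  ext
  · simp only [floor_add, fract_add, if_neg hpq, if_neg hqr, oplus_assoc]
    ring
  · simp only [fract_add, if_neg hpq, if_neg hqr, h, oplus_assoc]

protected theorem add_assoc (p q r : ChangGroup A) : p + q + r = p + (q + r) := by
  by_cases hpq : p.fract ⊕ₘ q.fract = ⊤ <;> by_cases hqr : q.fract ⊕ₘ r.fract = ⊤
  · exact add_assoc_of_eq_top_of_eq_top hpq hqr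
  · rw [oplus_comm] at hpq hqr
    have h := add_assoc_of_ne_top_of_eq_top hqr hpq
    rw [ChangGroup.add_comm p q, ChangGroup.add_comm _ r, ← h, ChangGroup.add_comm _ p,
      ChangGroup.add_comm r q]
  · exact add_assoc_of_ne_top_of_eq_top hpq hqr
  · exact add_assoc_of_ne_top_of_ne_top hpq hqr

noncomputable instance : AddCommGroup (ChangGroup A) where
  __ := AddGroup.ofLeftAxioms ChangGroup.add_assoc ChangGroup.zero_add ChangGroup.neg_add_cancel
  add_comm := ChangGroup.add_comm

noncomputable instance : LinearOrder (ChangGroup A) :=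
  LinearOrder.lift' (fun p => toLex (p.floor, p.fract)) fun _ _ h =>
    ChangGroup.ext (congrArg (fun x => (ofLex x).1) h) (congrArg (fun x => (ofLex x).2) h)

theorem le_iff {p q : ChangGroup A} :
    p ≤ q ↔ p.floor < q.floor ∨ p.floor = q.floor ∧ p.fract ≤ q.fract :=
  Prod.Lex.toLex_le_toLex

instance : IsOrderedAddMonoid (ChangGroup A) where
  add_le_add_left p q hpq r := by
    rw [le_iff, floor_add, floor_add, fract_add, fract_add]
    rcases le_iff.1 hpq with h | ⟨h, h_fract⟩
    · split_ifs with hp hq hq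
      · left; omega
      · have : p.fract ⊙ₘ r.fract ≤ q.fract ⊕ₘ r.fract :=
          (otimes_le_right _ _).trans (le_oplus_right _ _)
        grind
      · left; omega
      · left; omega
    · have h_oplus := oplus_le_oplus_right h_fract r.fract
      split_ifs with hp hq hq
      · exact .inr ⟨by rw [h], otimes_le_otimes_right h_fract r.fract⟩
      · exact absurd (top_le_iff.1 (hp ▸ h_oplus)) hq
      · left; omega
      · exact .inr ⟨by rw [h], h_oplus⟩

/-- The strong unit of Chang's group. -/
def unit : ChangGroup A := ⟨1, ⊥, bot_ne_top⟩

open Classical in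
/-- The embedding of a Wajsberg chain onto the unit interval of its Chang group. -/
noncomputable def embed (x : A) : ChangGroup A := if h : x = ⊤ then unit else ⟨0, x, h⟩

theorem embed_top : embed (⊤ : A) = unit := dif_pos rfl

theorem embed_of_ne_top {x : A} (h : x ≠ ⊤) : embed x = ⟨0, x, h⟩ := dif_neg h

theorem embed_bot : embed (⊥ : A) = 0 := embed_of_ne_top bot_ne_top

theorem embed_mono : Monotone (embed : A → ChangGroup A) := by
  intro x y hxy
  by_cases hy : y = ⊤
  · by_cases hx : x = ⊤
    · rw [hx, hy]
    · rw [hy, embed_top, embed_of_ne_top hx]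
      exact le_iff.2 (.inl zero_lt_one)
  · rw [embed_of_ne_top hy, embed_of_ne_top (ne_top_of_le_ne_top hy hxy)]
    exact le_iff.2 (.inr ⟨rfl, hxy⟩)

theorem embed_nonneg (x : A) : 0 ≤ embed x := embed_bot (A := A) ▸ embed_mono bot_le

theorem embed_le_unit (x : A) : embed x ≤ unit := embed_top (A := A) ▸ embed_mono le_top

theorem unit_pos : (0 : ChangGroup A) < unit := by
  refine (embed_bot (A := A) ▸ embed_le_unit ⊥).lt_of_ne fun h => ?_
  exact zero_ne_one (congrArg floor h)

theorem embed_eq_unit_iff {x : A} : embed x = unit ↔ x = ⊤ := by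
  refine ⟨fun h => ?_, fun h => h ▸ embed_top⟩
  by_contra hx
  rw [embed_of_ne_top hx] at h
  exact zero_ne_one (congrArg floor h)

theorem embed_himp_add_of_le {x y : A} (h : y ≤ x) :
    embed (x ⇨ y) + embed x = unit + embed y := by
  by_cases hx : x = ⊤
  · rw [hx, top_himp, embed_top, add_comm]
  by_cases hxy : x ⇨ y = ⊤
  · rw [hxy, embed_top, le_antisymm hxy h]
  have hy : y ≠ ⊤ := ne_top_of_le_ne_top hx h
  have h_carry : (x ⇨ y) ⊕ₘ x = ⊤ := by
    rw [oplus_comm, oplus_eq_top_iff, ← WajsbergAlgebra.himp_bot]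
    exact himp_le_himp_left bot_le x
  rw [embed_of_ne_top hxy, embed_of_ne_top hx, embed_of_ne_top hy]
  ext
  · simp [floor_add, unit, h_carry, bot_oplus, hy]
  · simp [fract_add, unit, h_carry, bot_oplus, hy, himp_otimes_self_of_le h]

theorem embed_himp (x y : A) : embed (x ⇨ y) = min unit (unit - embed x + embed y) := by
  rcases le_total x y with h | h
  · have := embed_mono h
    rw [le_iff_himp_eq_top.1 h, embed_top, min_eq_left]
    rwa [sub_add, le_sub_self_iff, sub_nonpos]
  · have h_eq : embed (x ⇨ y) = unit - embed x + embed y := by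
      rw [sub_add_eq_add_sub]
      exact eq_sub_of_add_eq (embed_himp_add_of_le h)
    rw [← h_eq, min_eq_right (embed_le_unit _)]

theorem embed_compl (x : A) : embed xᶜ = unit - embed x := by
  rw [← WajsbergAlgebra.himp_bot, eq_sub_iff_add_eq, embed_himp_add_of_le bot_le, embed_bot,
    add_zero]

end ChangGroup

end WajsbergAlgebra

theorem exists_addMonoidHom_pos {ι M K : Type*} [LinearOrder ι] [AddZeroClass M] [Field K]
    [LinearOrder K] [IsStrictOrderedRing K] (π : ι → M →+ K) (I : Finset ι) (P : Set M)
    (hP : P.Finite) (hpos : ∀ x ∈ P, ∃ i ∈ I, 0 < π i x ∧ ∀ j < i, π j x = 0) :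
    ∃ h : M →+ K, ∀ x ∈ P, 0 < h x := by
  induction I using Finset.induction_on_min generalizing P with
  | empty => exact ⟨0, fun x hx => by simpa using hpos x hx⟩
  | insert i I hi ih =>
    obtain ⟨h, hh⟩ := ih {x ∈ P | ∃ i ∈ I, 0 < π i x ∧ ∀ j < i, π j x = 0}
      (hP.subset (Set.sep_subset _ _)) fun _ hx => hx.2
    -- `i` is the least index, so a large multiple of `π i` dominates the combination `h` of the
    -- later coordinates wherever `π i` is positive.
    have h_eventually : ∀ x ∈ P, ∀ᶠ N : K in atTop, 0 < N * π i x + h x := by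
      intro x hx
      obtain ⟨k, hk, hkx, hlt⟩ := hpos x hx
      rcases Finset.mem_insert.1 hk with rfl | hk
      · exact (tendsto_atTop_add_const_right _ _
          (tendsto_id.atTop_mul_const hkx)).eventually_gt_atTop 0
      · refine .of_forall fun N => ?_
        rw [hlt i (hi k hk), mul_zero, zero_add]
        exact hh x ⟨hx, k, hk, hkx, hlt⟩
    obtain ⟨N, hN⟩ := ((hP.eventually_all).2 h_eventually).exists
    exact ⟨(AddMonoidHom.mulLeft N).comp (π i) + h, hN⟩

theorem exists_addMonoidHom_real_pos {G : Type*} [AddCommGroup G] [LinearOrder G]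
    [IsOrderedAddMonoid G] {P : Set G} (hP : P.Finite) (hpos : ∀ x ∈ P, 0 < x) :
    ∃ h : G →+ ℝ, ∀ x ∈ P, 0 < h x := by
  obtain ⟨f, hf, -⟩ := hahnEmbedding_isOrderedAddMonoid G
  have hf_mono : StrictMono f := f.monotone'.strictMono_of_injective hf
  let π (i : FiniteArchimedeanClass G) : G →+ ℝ :=
    { toFun x := (ofLex (f x)).coeff i
      map_zero' := by simp
      map_add' := by simp }
  have h_leading : ∀ x ∈ P, ∃ i, 0 < π i x ∧ ∀ j < i, π j x = 0 := by
    intro x hx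
    have hfx : 0 < f x := map_zero f ▸ hf_mono (hpos x hx)
    obtain ⟨i, h_lt, h_i⟩ := (HahnSeries.lt_iff _ _).1 hfx
    exact ⟨i, h_i, fun j hj => (h_lt j hj).symm⟩
  have := hP.to_subtype
  choose i hi using h_leading
  refine exists_addMonoidHom_pos π (Set.finite_range fun x : P => i x x.2).toFinset P hP
    fun x hx => ⟨i x hx, ?_, hi x hx⟩
  exact (Set.Finite.mem_toFinset _).2 ⟨⟨x, hx⟩, rfl⟩

theorem exists_addMonoidHom_real_strictMonoOn {G : Type*} [AddCommGroup G] [LinearOrder G]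
    [IsOrderedAddMonoid G] {S : Set G} (hS : S.Finite) : ∃ h : G →+ ℝ, StrictMonoOn h S := by
  obtain ⟨h, hh⟩ := exists_addMonoidHom_real_pos
    (((hS.prod hS).image fun p => p.2 - p.1).inter_of_left (Set.Ioi 0)) fun x hx => hx.2
  refine ⟨h, fun x hx y hy hxy => ?_⟩
  have := hh (y - x) ⟨⟨(x, y), ⟨hx, hy⟩, rfl⟩, sub_pos.2 hxy⟩
  rwa [map_sub, sub_pos] at this

namespace WajsbergAlgebra

open ChangGroup

variable {A : Type*} [WajsbergChain A]

/-- The real assignment `n ↦ h (w n) / h u` induced by an assignment `w` into a Wajsberg chain and a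
homomorphism `h` from its Chang group, projected to `[0,1]` since `h` need not be monotone. -/
noncomputable def realAssignment (h : ChangGroup A →+ ℝ) (w : ℕ → A) (n : ℕ) : ℝ :=
  Set.projIcc (0 : ℝ) 1 zero_le_one (h (embed (w n)) / h unit)

theorem exists_finite_forall_leval_eq (w : ℕ → A) (φ : LFml) :
    ∃ S : Set (ChangGroup A), S.Finite ∧ ∀ h : ChangGroup A →+ ℝ, 0 < h unit → MonotoneOn h S →
      leval (realAssignment h w) φ = h (embed (eval w φ)) / h unit := by
  induction φ with
  | var n =>
    refine ⟨{0, embed (w n), unit}, Set.toFinite _, fun h hu hmono => ?_⟩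
    have h0 : 0 ≤ h (embed (w n)) :=
      map_zero h ▸ hmono (by simp) (by simp) (embed_nonneg (w n))
    have h1 : h (embed (w n)) ≤ h unit := hmono (by simp) (by simp) (embed_le_unit (w n))
    exact congrArg Subtype.val
      (Set.projIcc_of_mem zero_le_one ⟨div_nonneg h0 hu.le, (div_le_one hu).2 h1⟩)
  | neg φ ih =>
    obtain ⟨S, hS, ih⟩ := ih
    refine ⟨S, hS, fun h hu hmono => ?_⟩
    rw [leval, ih h hu hmono, eval, embed_compl, map_sub, sub_div, div_self hu.ne']
  | imp φ ψ ihφ ihψ =>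
    obtain ⟨S₁, hS₁, ihφ⟩ := ihφ
    obtain ⟨S₂, hS₂, ihψ⟩ := ihψ
    let z := unit - embed (eval w φ) + embed (eval w ψ)
    refine ⟨{unit, z} ∪ (S₁ ∪ S₂), (Set.toFinite _).union (hS₁.union hS₂), fun h hu hmono => ?_⟩
    have h_min : h (min unit z) = min (h unit) (h z) := hmono.map_min (by simp) (by simp)
    rw [leval, ihφ h hu (hmono.mono fun x hx => .inr (.inl hx)),
      ihψ h hu (hmono.mono fun x hx => .inr (.inr hx)), eval, embed_himp, h_min,
      ← min_div_div_right hu.le, map_add, map_sub, add_div, sub_div, div_self hu.ne']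

theorem exists_leval_eq_one_iff_eval_eq_top (w : ℕ → A) {F : Set LFml} (hF : F.Finite) :
    ∃ v : ℕ → ℝ, (∀ n, v n ∈ Set.Icc (0 : ℝ) 1) ∧ ∀ φ ∈ F, leval v φ = 1 ↔ eval w φ = ⊤ := by
  choose S hS h_leval using exists_finite_forall_leval_eq w
  let R : Set (ChangGroup A) :=
    {0, unit} ∪ ((fun φ => embed (eval w φ)) '' F ∪ ⋃ φ ∈ F, S φ)
  have hR : R.Finite :=
    (Set.toFinite _).union ((hF.image _).union (hF.biUnion fun φ _ => hS φ))
  obtain ⟨h, hmono⟩ := exists_addMonoidHom_real_strictMonoOn hR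
  have hu : 0 < h unit := map_zero h ▸ hmono (by simp [R]) (by simp [R]) unit_pos
  refine ⟨realAssignment h w, fun n => Subtype.prop _, fun φ hφ => ?_⟩
  have hSR : S φ ⊆ R := fun x hx => .inr (.inr (Set.mem_biUnion hφ hx))
  have h_embed : embed (eval w φ) ∈ R := .inr (.inl ⟨φ, hφ, rfl⟩)
  rw [h_leval φ h hu (hmono.monotoneOn.mono hSR), div_eq_one_iff_eq hu.ne',
    hmono.injOn.eq_iff h_embed (by simp [R]), embed_eq_unit_iff]

end WajsbergAlgebra

/-- finite strong standard completeness for Ł: if `Γ` is a finite set of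
formulas and `φ` a formula of the language of Ł, then `Γ ⊢_Ł φ` iff every assignment
into `[0,1]_Ł` that gives value `1` to all formulas of `Γ` gives value `1` to `φ`. -/
theorem luk_finite_strong_standard_completeness (Γ : Set LFml) (φ : LFml)
    (hfin : Γ.Finite) :
    LukProv Γ φ ↔
      ∀ v : ℕ → ℝ, (∀ n, v n ∈ Set.Icc (0 : ℝ) 1) →
        (∀ ψ ∈ Γ, leval v ψ = 1) → leval v φ = 1 := by
  refine ⟨fun h v hv hΓ => h.leval_eq_one hv hΓ, fun h_valid => ?_⟩
  by_contra hφ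
  obtain ⟨T, hΓT, hT⟩ := exists_maximal_not_lukProv hφ
  let _ := LindenbaumAlgebra.wajsbergChain hT.1 (isLinearTheory_of_maximal hT)
  obtain ⟨v, hv, h_iff⟩ := WajsbergAlgebra.exists_leval_eq_one_iff_eval_eq_top
    (fun n => LindenbaumAlgebra.mk T (.var n)) (hfin.insert φ)
  have leval_eq_one_iff : ∀ ψ ∈ insert φ Γ, leval v ψ = 1 ↔ LukProv T ψ := fun ψ hψ => by
    rw [h_iff ψ hψ, LindenbaumAlgebra.eval_mk_var, LindenbaumAlgebra.mk_eq_top]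
  have hΓ : ∀ ψ ∈ Γ, leval v ψ = 1 := fun ψ hψ =>
    (leval_eq_one_iff ψ (.inr hψ)).2 (.hyp (hΓT hψ))
  exact hT.1 ((leval_eq_one_iff φ (.inl rfl)).1 (h_valid v hv hΓ))
end
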